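/- For every integer d ≥ 1 there exists a constant K_d > 0, depending only on d, such that for every integer n ≥ 2 and every degree-d polynomial threshold function f = sgn(p) on {-1,1}^n with α(p) ≤ (K_d · log n)^{−2d}, one has BSA[f] ≤ α(p). -/

import Mathlib

open Finset
open scoped Classical

/-- The embedding of `Bool` into `{-1, 1} ⊆ ℝ`. -/
noncomputable def chi (b : Bool) : ℝ := if b then 1 else -1

/-- Flip the `i`-th coordinate of a point of the Boolean cube. -/
def flipAt {n : ℕ} (x : Fin n → Bool) (i : Fin n) : Fin n → Bool :=
  Function.update x i (!x i)

/-- The sensitivity of `f` at `x`: the number of coordinates whose flip changes `f`. -/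
noncomputable def sens {n : ℕ} (f : (Fin n → Bool) → ℝ) (x : Fin n → Bool) : ℕ :=
  (Finset.univ.filter (fun i => f (flipAt x i) ≠ f x)).card

/-- The Boolean surface area `BSA[f] = E_x √(s_f(x))`, `x` uniform on the cube. -/
noncomputable def BSA {n : ℕ} (f : (Fin n → Bool) → ℝ) : ℝ :=
  (∑ x : Fin n → Bool, Real.sqrt (sens f x)) / 2 ^ n

/-- Evaluation of a polynomial at a point of the cube `{-1,1}^n`. -/
noncomputable def pev {n : ℕ} (p : MvPolynomial (Fin n) ℝ) (x : Fin n → Bool) : ℝ :=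
  MvPolynomial.eval (fun i => chi (x i)) p

/-- `f` is a degree-`d` polynomial threshold function: `f = sgn p` for some multilinear
polynomial `p` of total degree at most `d` that is nonvanishing on the cube. -/
def IsPTF (d : ℕ) {n : ℕ} (f : (Fin n → Bool) → ℝ) : Prop :=
  ∃ p : MvPolynomial (Fin n) ℝ,
    (∀ m ∈ p.support, ∀ i, m i ≤ 1) ∧ p.totalDegree ≤ d ∧
    ∀ x, pev p x ≠ 0 ∧ f x = Real.sign (pev p x)

/-- The quantity `α(p) = E_{A,B} min(1, (D_B p(A))² / p(A)²)` with `A, B` independent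
uniform on the cube, where `D_B p(A) = Σ_j B_j (p(A) - p(A^{⊕j}))/2`. -/
noncomputable def alphaP {n : ℕ} (p : MvPolynomial (Fin n) ℝ) : ℝ :=
  (∑ A : Fin n → Bool, ∑ B : Fin n → Bool,
    min 1 ((∑ j, chi (B j) * ((pev p A - pev p (flipAt A j)) / 2)) ^ 2 / (pev p A) ^ 2)) /
    (2 ^ n * 2 ^ n)


/-- Expectation over the uniform cube. -/
noncomputable def Ex {n : ℕ} (F : (Fin n → Bool) → ℝ) : ℝ := (∑ x, F x) / 2 ^ n

lemma Ex_add {n : ℕ} (F G : (Fin n → Bool) → ℝ) :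
    Ex (fun x => F x + G x) = Ex F + Ex G := by
  unfold Ex; rw [Finset.sum_add_distrib, add_div]

lemma Ex_sub {n : ℕ} (F G : (Fin n → Bool) → ℝ) :
    Ex (fun x => F x - G x) = Ex F - Ex G := by
  unfold Ex; rw [Finset.sum_sub_distrib, sub_div]

lemma Ex_mul_left {n : ℕ} (c : ℝ) (F : (Fin n → Bool) → ℝ) :
    Ex (fun x => c * F x) = c * Ex F := by
  unfold Ex; rw [← Finset.mul_sum, mul_div_assoc]

lemma Ex_const {n : ℕ} (c : ℝ) : Ex (fun _ : Fin n → Bool => c) = c := by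
  unfold Ex; simp

lemma Ex_sum {n : ℕ} {ι : Type*} (s : Finset ι) (F : ι → (Fin n → Bool) → ℝ) :
    Ex (fun x => ∑ j ∈ s, F j x) = ∑ j ∈ s, Ex (F j) := by
  unfold Ex; rw [Finset.sum_comm, Finset.sum_div]

lemma Ex_mono {n : ℕ} {F G : (Fin n → Bool) → ℝ} (h : ∀ x, F x ≤ G x) : Ex F ≤ Ex G := by
  unfold Ex
  exact div_le_div_of_nonneg_right (Finset.sum_le_sum fun x _ => h x) (by positivity)

lemma Ex_nonneg {n : ℕ} {F : (Fin n → Bool) → ℝ} (h : ∀ x, 0 ≤ F x) : 0 ≤ Ex F := by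
  unfold Ex
  exact div_nonneg (Finset.sum_nonneg fun x _ => h x) (by positivity)

lemma flipAt_flipAt {n : ℕ} (x : Fin n → Bool) (i : Fin n) : flipAt (flipAt x i) i = x := by
  simp [flipAt]

lemma sum_flip {n : ℕ} (F : (Fin n → Bool) → ℝ) (i : Fin n) :
    ∑ x, F (flipAt x i) = ∑ x, F x := by
  have hinv : Function.Involutive (fun x : Fin n → Bool => flipAt x i) :=
    fun x => flipAt_flipAt x i
  exact Equiv.sum_comp (hinv.toPerm) F

lemma Ex_flip {n : ℕ} (F : (Fin n → Bool) → ℝ) (i : Fin n) :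
    Ex (fun x => F (flipAt x i)) = Ex F := by
  unfold Ex; rw [sum_flip]

lemma Ex_cs {n : ℕ} (F G : (Fin n → Bool) → ℝ) :
    (Ex (fun x => F x * G x)) ^ 2 ≤ Ex (fun x => F x ^ 2) * Ex (fun x => G x ^ 2) := by
  unfold Ex
  rw [div_pow, div_mul_div_comm, ← sq]
  exact div_le_div_of_nonneg_right (Finset.sum_mul_sq_le_sq_mul_sq _ _ _) (by positivity)

lemma chi_sq (b : Bool) : chi b ^ 2 = 1 := by cases b <;> simp [chi]

lemma chi_not (b : Bool) : chi (!b) = - chi b := by cases b <;> simp [chi]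

lemma chi_flip_self {n : ℕ} (x : Fin n → Bool) (i : Fin n) :
    chi (flipAt x i i) = - chi (x i) := by
  simp [flipAt, chi_not]

lemma flip_ne {n : ℕ} (x : Fin n → Bool) {i j : Fin n} (h : j ≠ i) :
    flipAt x i j = x j := by
  simp [flipAt, h]

lemma Ex_chi_mul {n : ℕ} (i : Fin n) (u : (Fin n → Bool) → ℝ)
    (hu : ∀ x, u (flipAt x i) = u x) : Ex (fun x => chi (x i) * u x) = 0 := by
  have h := Ex_flip (fun x => chi (x i) * u x) i
  simp only [chi_flip_self, hu] at h
  have h2 := Ex_mul_left (-1) (fun x => chi (x i) * u x)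
  have : (fun x : Fin n → Bool => -chi (x i) * u x) =
    (fun x => -1 * (chi (x i) * u x)) := by funext x; ring
  rw [this] at h
  linarith

/-- Walsh character. -/
noncomputable def wal {n : ℕ} (S : Finset (Fin n)) (x : Fin n → Bool) : ℝ :=
  ∏ i ∈ S, chi (x i)

/-- Functions of degree at most `d` depending only on the coordinates in `T`. -/
noncomputable def Deg {n : ℕ} (T : Finset (Fin n)) (d : ℕ) :
    Submodule ℝ ((Fin n → Bool) → ℝ) :=
  Submodule.span ℝ {F | ∃ S : Finset (Fin n), S ⊆ T ∧ S.card ≤ d ∧ F = wal S}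

lemma wal_mem {n : ℕ} {T S : Finset (Fin n)} {d : ℕ} (h : S ⊆ T) (hc : S.card ≤ d) :
    wal S ∈ Deg T d := Submodule.subset_span ⟨S, h, hc, rfl⟩

lemma Deg_empty {n : ℕ} {d : ℕ} {f : (Fin n → Bool) → ℝ}
    (hf : f ∈ Deg (∅ : Finset (Fin n)) d) : ∃ c : ℝ, f = fun _ => c := by
  induction hf using Submodule.span_induction with
  | mem F h =>
    obtain ⟨S, hS, -, rfl⟩ := h
    have : S = ∅ := Finset.subset_empty.mp hS
    subst this
    exact ⟨1, by funext x; simp [wal]⟩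
  | zero => exact ⟨0, rfl⟩
  | add F G _ _ hF hG =>
    obtain ⟨a, rfl⟩ := hF
    obtain ⟨b, rfl⟩ := hG
    exact ⟨a + b, rfl⟩
  | smul c F _ hF =>
    obtain ⟨a, rfl⟩ := hF
    exact ⟨c * a, rfl⟩

lemma Deg_insert {n : ℕ} {d : ℕ} {T : Finset (Fin n)} {i : Fin n}
    {f : (Fin n → Bool) → ℝ}
    (hf : f ∈ Deg (insert i T) d) : ∃ g ∈ Deg T d, ∃ h ∈ Deg T (d - 1),
      (d = 0 → h = 0) ∧ f = fun x => g x + chi (x i) * h x := by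
  induction hf using Submodule.span_induction with
  | mem F h =>
    obtain ⟨S, hS, hc, rfl⟩ := h
    by_cases hi : i ∈ S
    · have hpos : 0 < S.card := Finset.card_pos.mpr ⟨i, hi⟩
      refine ⟨0, Submodule.zero_mem _, wal (S.erase i), wal_mem ?_ ?_, fun h => by omega, ?_⟩
      · exact Finset.subset_insert_iff.mp hS
      · rw [Finset.card_erase_of_mem hi]; omega
      · funext x
        simp only [wal, Pi.zero_apply, zero_add]
        rw [Finset.mul_prod_erase S (fun j => chi (x j)) hi]
    · refine ⟨wal S, wal_mem ?_ hc, 0, Submodule.zero_mem _, fun _ => rfl, ?_⟩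
      · exact (Finset.subset_insert_iff_of_notMem hi).mp hS
      · funext x; simp
  | zero => exact ⟨0, Submodule.zero_mem _, 0, Submodule.zero_mem _, fun _ => rfl, by funext x; simp⟩
  | add F G _ _ hF hG =>
    obtain ⟨g, hg, h, hh, h0, rfl⟩ := hF
    obtain ⟨g', hg', h', hh', h0', rfl⟩ := hG
    refine ⟨g + g', Submodule.add_mem _ hg hg', h + h', Submodule.add_mem _ hh hh', ?_, ?_⟩
    · intro hd; rw [h0 hd, h0' hd, add_zero]
    · funext x; simp only [Pi.add_apply]; ring
  | smul c F _ hF =>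
    obtain ⟨g, hg, h, hh, h0, rfl⟩ := hF
    refine ⟨c • g, Submodule.smul_mem _ _ hg, c • h, Submodule.smul_mem _ _ hh, ?_, ?_⟩
    · intro hd; rw [h0 hd, smul_zero]
    · funext x; simp only [Pi.smul_apply, smul_eq_mul]; ring

lemma Deg_flip {n : ℕ} {d : ℕ} {T : Finset (Fin n)} {i : Fin n} (hi : i ∉ T)
    {f : (Fin n → Bool) → ℝ} (hf : f ∈ Deg T d) : ∀ x, f (flipAt x i) = f x := by
  induction hf using Submodule.span_induction with
  | mem F h =>
    obtain ⟨S, hS, hc, rfl⟩ := h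
    intro x
    refine Finset.prod_congr rfl fun j hj => ?_
    rw [flip_ne]
    rintro rfl
    exact hi (hS hj)
  | zero => intro x; rfl
  | add F G _ _ hF hG => intro x; simp [hF x, hG x]
  | smul c F _ hF => intro x; simp [hF x]

/-- Bonami's lemma. -/
lemma bonami {n : ℕ} (T : Finset (Fin n)) : ∀ (d : ℕ) (f : (Fin n → Bool) → ℝ),
    f ∈ Deg T d → Ex (fun x => f x ^ 4) ≤ 9 ^ d * (Ex (fun x => f x ^ 2)) ^ 2 := by
  induction T using Finset.induction_on with
  | empty =>
    intro d f hf
    obtain ⟨c, rfl⟩ := Deg_empty hf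
    simp only [Ex_const]
    have : (1 : ℝ) ≤ 9 ^ d := one_le_pow₀ (by norm_num)
    nlinarith [sq_nonneg (c ^ 2)]
  | insert i T hi ih =>
    intro d f hf
    obtain ⟨g, hg, h, hh, h0, rfl⟩ := Deg_insert hf
    have fg := Deg_flip hi hg
    have fh := Deg_flip hi hh
    have e4 : Ex (fun x => (g x + chi (x i) * h x) ^ 4) =
        Ex (fun x => g x ^ 4) + 6 * Ex (fun x => g x ^ 2 * h x ^ 2) + Ex (fun x => h x ^ 4) := by
      have z := Ex_chi_mul i (fun x => 4 * (g x ^ 3 * h x + g x * h x ^ 3))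
        (fun x => by simp only [fg, fh])
      rw [← Ex_mul_left, ← Ex_add, ← Ex_add, ← sub_eq_zero, ← Ex_sub, ← z]
      congr 1; funext x
      have c2 := chi_sq (x i)
      have c3 : chi (x i) ^ 3 = chi (x i) := by rw [pow_succ, c2, one_mul]
      have c4 : chi (x i) ^ 4 = 1 := by rw [show 4 = 2 * 2 by rfl, pow_mul, c2, one_pow]
      ring_nf
      rw [c2, c3, c4]; ring
    have e2 : Ex (fun x => (g x + chi (x i) * h x) ^ 2) =
        Ex (fun x => g x ^ 2) + Ex (fun x => h x ^ 2) := by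
      have z := Ex_chi_mul i (fun x => 2 * (g x * h x))
        (fun x => by simp only [fg, fh])
      rw [← Ex_add, ← sub_eq_zero, ← Ex_sub, ← z]
      congr 1; funext x
      have c2 := chi_sq (x i)
      ring_nf
      rw [c2]; ring
    rw [e4, e2]
    have hG := ih d g hg
    have hH := ih (d - 1) h hh
    have hA : 0 ≤ Ex (fun x => g x ^ 2) := Ex_nonneg fun x => by positivity
    have hB : 0 ≤ Ex (fun x => h x ^ 2) := Ex_nonneg fun x => by positivity
    have cs := Ex_cs (fun x => g x ^ 2) (fun x => h x ^ 2)
    simp only [← pow_mul] at cs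
    norm_num at cs
    have hG4 : 0 ≤ Ex (fun x => g x ^ 4) := Ex_nonneg fun x => by positivity
    have hH4 : 0 ≤ Ex (fun x => h x ^ 4) := Ex_nonneg fun x => by positivity
    set A := Ex (fun x => g x ^ 2)
    set B := Ex (fun x => h x ^ 2)
    set X := Ex (fun x => g x ^ 2 * h x ^ 2)
    rcases d with _ | e
    · have : h = 0 := h0 rfl
      subst this
      have hX : X = 0 := by simp [X, Ex]
      have hBB : B = 0 := by simp [B, Ex]
      have hH4' : Ex (fun x : Fin n → Bool => (0 : (Fin n → Bool) → ℝ) x ^ 4) = 0 := by simp [Ex]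
      rw [hX, hBB, hH4']
      simpa using hG
    · simp only [Nat.add_sub_cancel] at hH
      have hX : X ≤ 3 * 9 ^ e * (A * B) := by
        refine abs_le_of_sq_le_sq' ?_ (by positivity) |>.2
        calc X ^ 2 ≤ _ := cs
          _ ≤ (9 ^ (e + 1) * A ^ 2) * (9 ^ e * B ^ 2) := by gcongr
          _ = _ := by rw [pow_succ]; ring
      have h9 : (0 : ℝ) < 9 ^ e := by positivity
      have hpw : (9 : ℝ) ^ (e + 1) = 9 * 9 ^ e := by ring
      rw [hpw] at hG ⊢
      have : 0 ≤ 9 ^ e * B ^ 2 := by positivity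
      nlinarith

lemma Deg_mul {n : ℕ} {d e : ℕ} {f g : (Fin n → Bool) → ℝ}
    (hf : f ∈ Deg univ d) (hg : g ∈ Deg univ e) : f * g ∈ Deg univ (d + e) := by
  have key : ∀ S T : Finset (Fin n), S.card ≤ d → T.card ≤ e → wal S * wal T ∈ Deg univ (d + e) := by
    intro S T hS hT
    have : wal S * wal T = wal (symmDiff S T) := by
      funext x
      simp only [wal, Pi.mul_apply]
      rw [← Finset.prod_sdiff (Finset.inter_subset_left : S ∩ T ⊆ S),
        ← Finset.prod_sdiff (Finset.inter_subset_right : S ∩ T ⊆ T)]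
      rw [symmDiff_def, Finset.sup_eq_union, Finset.prod_union disjoint_sdiff_sdiff]
      have h1 : (∏ i ∈ S ∩ T, chi (x i)) * (∏ i ∈ S ∩ T, chi (x i)) = 1 := by
        rw [← Finset.prod_mul_distrib]
        exact Finset.prod_eq_one fun i _ => by rw [← sq, chi_sq]
      rw [Finset.sdiff_inter_self_left, Finset.sdiff_inter_self_right]
      calc _ = (∏ i ∈ S \ T, chi (x i)) * (∏ i ∈ T \ S, chi (x i)) *
          ((∏ i ∈ S ∩ T, chi (x i)) * (∏ i ∈ S ∩ T, chi (x i))) := by ring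
        _ = _ := by rw [h1, mul_one]
    rw [this]
    refine wal_mem (Finset.subset_univ _) ?_
    calc (symmDiff S T).card ≤ (S ∪ T).card := Finset.card_le_card symmDiff_le_sup
      _ ≤ S.card + T.card := Finset.card_union_le _ _
      _ ≤ _ := by omega
  have := Submodule.mul_mem_mul hf hg
  unfold Deg at this
  rw [Submodule.span_mul_span] at this
  refine Submodule.span_le.mpr ?_ this
  rintro _ ⟨_, ⟨S, -, hS, rfl⟩, _, ⟨T, -, hT, rfl⟩, rfl⟩
  exact key S T hS hT

lemma Deg_pow {n : ℕ} {d : ℕ} {f : (Fin n → Bool) → ℝ}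
    (hf : f ∈ Deg univ d) (k : ℕ) : (fun x => f x ^ 2 ^ k) ∈ Deg univ (d * 2 ^ k) := by
  induction k with
  | zero => simpa using hf
  | succ k ih =>
    have := Deg_mul ih ih
    have e1 : (fun x => f x ^ 2 ^ (k + 1)) = (fun x => f x ^ 2 ^ k) * (fun x => f x ^ 2 ^ k) := by
      funext x; simp only [Pi.mul_apply]; ring
    have e2 : d * 2 ^ (k + 1) = d * 2 ^ k + d * 2 ^ k := by ring
    rw [e1, e2]; exact this

lemma moment {n : ℕ} {d : ℕ} {f : (Fin n → Bool) → ℝ}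
    (hf : f ∈ Deg univ d) (k : ℕ) :
    Ex (fun x => f x ^ 2 ^ (k + 1)) ≤ (3 ^ (d * k) * Ex (fun x => f x ^ 2)) ^ 2 ^ k := by
  induction k with
  | zero => simp
  | succ k ih =>
    have h := bonami univ _ _ (Deg_pow hf k)
    simp only [← pow_mul] at h
    have e1 : 2 ^ k * 4 = 2 ^ (k + 1 + 1) := by ring
    have e2 : 2 ^ k * 2 = 2 ^ (k + 1) := by ring
    rw [e1, e2] at h
    refine h.trans ?_
    have h0 : 0 ≤ Ex (fun x => f x ^ 2 ^ (k + 1)) := Ex_nonneg fun x => by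
      rw [pow_succ, mul_comm, pow_mul]; positivity
    calc _ ≤ 9 ^ (d * 2 ^ k) * ((3 ^ (d * k) * Ex (fun x => f x ^ 2)) ^ 2 ^ k) ^ 2 := by gcongr
      _ = _ := by
        rw [← pow_mul, ← pow_succ, mul_pow, mul_pow, show (9 : ℝ) = 3 ^ 2 by norm_num,
          ← pow_mul, ← pow_mul, ← pow_mul, ← mul_assoc, ← pow_add]
        congr 2; ring

/-- Discrete derivative. -/
noncomputable def Dv {n : ℕ} (f : (Fin n → Bool) → ℝ) (j : Fin n) (x : Fin n → Bool) : ℝ :=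
  (f x - f (flipAt x j)) / 2

lemma Dv_mem {n : ℕ} {d : ℕ} {f : (Fin n → Bool) → ℝ} (hf : f ∈ Deg univ d) (j : Fin n) :
    Dv f j ∈ Deg univ d := by
  induction hf using Submodule.span_induction with
  | mem F h =>
    obtain ⟨S, hS, hc, rfl⟩ := h
    by_cases hj : j ∈ S
    · have : Dv (wal S) j = wal S := by
        funext x
        unfold Dv wal
        rw [← Finset.mul_prod_erase S (fun i => chi (x i)) hj,
          ← Finset.mul_prod_erase S (fun i => chi (flipAt x j i)) hj, chi_flip_self]
        have : ∏ i ∈ S.erase j, chi (flipAt x j i) = ∏ i ∈ S.erase j, chi (x i) :=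
          Finset.prod_congr rfl fun i hi => by rw [flip_ne x (Finset.ne_of_mem_erase hi)]
        rw [this]; ring
      rw [this]; exact wal_mem hS hc
    · have : Dv (wal S) j = 0 := by
        funext x
        have := Deg_flip hj (wal_mem (Finset.Subset.refl S) hc) x
        simp [Dv, this]
      rw [this]; exact Submodule.zero_mem _
  | zero =>
    have : Dv (0 : (Fin n → Bool) → ℝ) j = 0 := by funext x; simp [Dv]
    rw [this]; exact Submodule.zero_mem _
  | add F G _ _ hF hG =>
    have : Dv (F + G) j = Dv F j + Dv G j := by funext x; simp [Dv]; ring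
    rw [this]; exact Submodule.add_mem _ hF hG
  | smul c F _ hF =>
    have : Dv (c • F) j = c • Dv F j := by funext x; simp [Dv]; ring
    rw [this]; exact Submodule.smul_mem _ _ hF

/-- Poincaré inequality. -/
lemma poincare {n : ℕ} (T : Finset (Fin n)) : ∀ (d : ℕ) (f : (Fin n → Bool) → ℝ),
    f ∈ Deg T d → Ex (fun x => f x ^ 2) - (Ex f) ^ 2 ≤ ∑ j ∈ T, Ex (fun x => Dv f j x ^ 2) := by
  induction T using Finset.induction_on with
  | empty =>
    intro d f hf
    obtain ⟨c, rfl⟩ := Deg_empty hf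
    simp [Ex_const]
  | insert i T hi ih =>
    intro d f hf
    obtain ⟨g, hg, h, hh, h0, rfl⟩ := Deg_insert hf
    have fg := Deg_flip hi hg
    have fh := Deg_flip hi hh
    have e2 : ∀ u v : (Fin n → Bool) → ℝ, (∀ x, u (flipAt x i) = u x) →
        (∀ x, v (flipAt x i) = v x) → Ex (fun x => (u x + chi (x i) * v x) ^ 2) =
        Ex (fun x => u x ^ 2) + Ex (fun x => v x ^ 2) := by
      intro u v hu hv
      have z := Ex_chi_mul i (fun x => 2 * (u x * v x))
        (fun x => by simp only [hu, hv])
      rw [← Ex_add, ← sub_eq_zero, ← Ex_sub, ← z]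
      congr 1; funext x
      have c2 := chi_sq (x i)
      ring_nf
      rw [c2]; ring
    have e1 : Ex (fun x => g x + chi (x i) * h x) = Ex g := by
      rw [Ex_add, Ex_chi_mul i h fh, add_zero]
    rw [e2 g h fg fh, e1, Finset.sum_insert hi]
    have ei : Ex (fun x => Dv (fun x => g x + chi (x i) * h x) i x ^ 2) = Ex (fun x => h x ^ 2) := by
      congr 1; funext x
      simp only [Dv, fg, fh, chi_flip_self]
      have c2 := chi_sq (x i)
      ring_nf
      rw [c2, one_mul]
    have ej : ∀ j ∈ T, Ex (fun x => Dv g j x ^ 2) ≤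
        Ex (fun x => Dv (fun x => g x + chi (x i) * h x) j x ^ 2) := by
      intro j hj
      have hji : j ≠ i := by rintro rfl; exact hi hj
      have comm : ∀ x, flipAt (flipAt x i) j = flipAt (flipAt x j) i := by
        intro x
        simp only [flipAt]
        rw [Function.update_comm hji]
        simp [hji, hji.symm]
      have hu : ∀ u : (Fin n → Bool) → ℝ, (∀ x, u (flipAt x i) = u x) →
          ∀ x, Dv u j (flipAt x i) = Dv u j x := by
        intro u hu x
        simp only [Dv, comm, hu]
      have := e2 (Dv g j) (Dv h j) (hu g fg) (hu h fh)
      have e : (fun x => Dv (fun x => g x + chi (x i) * h x) j x ^ 2) =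
          fun x => (Dv g j x + chi (x i) * Dv h j x) ^ 2 := by
        funext x
        simp only [Dv, flip_ne x hji.symm]
        ring
      rw [e, this]
      have : 0 ≤ Ex (fun x => Dv h j x ^ 2) := Ex_nonneg fun x => by positivity
      linarith
    rw [ei]
    have := ih d g hg
    have := Finset.sum_le_sum ej
    linarith

lemma pev_mem {n d : ℕ} (p : MvPolynomial (Fin n) ℝ) (hm : ∀ m ∈ p.support, ∀ i, m i ≤ 1)
    (hd : p.totalDegree ≤ d) : pev p ∈ Deg univ d := by
  have : pev p = ∑ m ∈ p.support, p.coeff m • wal m.support := by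
    funext x
    simp only [pev, MvPolynomial.eval_eq, Finset.sum_apply, Pi.smul_apply, smul_eq_mul, wal]
    refine Finset.sum_congr rfl fun m hmm => ?_
    congr 1
    refine Finset.prod_congr rfl fun i hi => ?_
    have h1 := hm m hmm i
    have h2 : m i ≠ 0 := Finsupp.mem_support_iff.mp hi
    have : m i = 1 := by omega
    rw [this, pow_one]
  rw [this]
  refine Submodule.sum_mem _ fun m hmm => Submodule.smul_mem _ _ (wal_mem (subset_univ _) ?_)
  refine le_trans ?_ ((MvPolynomial.le_totalDegree hmm).trans hd)
  rw [Finsupp.sum, Finset.card_eq_sum_ones]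
  refine Finset.sum_le_sum fun i hi => ?_
  have h2 : m i ≠ 0 := Finsupp.mem_support_iff.mp hi
  omega

lemma Ex_chi_chi {n : ℕ} (i j : Fin n) :
    Ex (fun x : Fin n → Bool => chi (x i) * chi (x j)) = if i = j then 1 else 0 := by
  split_ifs with h
  · subst h
    have : (fun x : Fin n → Bool => chi (x i) * chi (x i)) = fun _ => 1 := by
      funext x; rw [← sq, chi_sq]
    rw [this, Ex_const]
  · exact Ex_chi_mul i (fun x => chi (x j)) fun x => by rw [flip_ne x (Ne.symm h)]

lemma lin_second {n : ℕ} (c : Fin n → ℝ) :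
    Ex (fun B : Fin n → Bool => (∑ j, chi (B j) * c j) ^ 2) = ∑ j, c j ^ 2 := by
  have : (fun B : Fin n → Bool => (∑ j, chi (B j) * c j) ^ 2) =
      fun B => ∑ i, ∑ j, (c i * c j) * (chi (B i) * chi (B j)) := by
    funext B
    rw [sq, Finset.sum_mul_sum]
    exact Finset.sum_congr rfl fun i _ => Finset.sum_congr rfl fun j _ => by ring
  rw [this, Ex_sum]
  refine Finset.sum_congr rfl fun i _ => ?_
  rw [Ex_sum]
  simp only [Ex_mul_left, Ex_chi_chi]
  simp [sq]

lemma lin_fourth {n : ℕ} (c : Fin n → ℝ) :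
    Ex (fun B : Fin n → Bool => (∑ j, chi (B j) * c j) ^ 4) ≤ 9 * (∑ j, c j ^ 2) ^ 2 := by
  have hm : (fun B : Fin n → Bool => ∑ j, chi (B j) * c j) ∈ Deg (univ : Finset (Fin n)) 1 := by
    have : (fun B : Fin n → Bool => ∑ j, chi (B j) * c j) = ∑ j, c j • wal {j} := by
      funext B
      simp [wal, mul_comm]
    rw [this]
    exact Submodule.sum_mem _ fun j _ => Submodule.smul_mem _ _ (wal_mem (subset_univ _) (by simp))
  have := bonami univ 1 _ hm
  rw [lin_second] at this
  simpa using this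

lemma min_lower (u t : ℝ) (ht : 0 < t) (hu : 0 ≤ u) : u - u ^ 2 / (4 * t) ≤ min t u := by
  refine le_min ?_ ?_
  · have : u - u ^ 2 / (4 * t) = t - (u - 2 * t) ^ 2 / (4 * t) := by field_simp; ring
    rw [this]
    have : 0 ≤ (u - 2 * t) ^ 2 / (4 * t) := by positivity
    linarith
  · have : 0 ≤ u ^ 2 / (4 * t) := by positivity
    linarith

lemma inner_lower {n : ℕ} (c : Fin n → ℝ) (P : ℝ) (hP : 0 < P) :
    (1 / 9) * min 1 ((∑ j, c j ^ 2) / P) ≤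
      Ex (fun B : Fin n → Bool => min 1 ((∑ j, chi (B j) * c j) ^ 2 / P)) := by
  set N := ∑ j, c j ^ 2 with hN
  have hN0 : 0 ≤ N := Finset.sum_nonneg fun j _ => sq_nonneg _
  have key : ∀ l : ℝ, 0 ≤ l → l ≤ 1 → l * (N / P) - 9 / 4 * (l * (N / P)) ^ 2 ≤
      Ex (fun B : Fin n → Bool => min 1 ((∑ j, chi (B j) * c j) ^ 2 / P)) := by
    intro l hl0 hl1
    have h1 : Ex (fun B : Fin n → Bool => (l / P) * (∑ j, chi (B j) * c j) ^ 2 -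
        ((l / P) ^ 2 / 4) * (∑ j, chi (B j) * c j) ^ 4) ≤
        Ex (fun B : Fin n → Bool => min 1 ((∑ j, chi (B j) * c j) ^ 2 / P)) := by
      refine Ex_mono fun B => ?_
      set Y := ∑ j, chi (B j) * c j
      have hY : 0 ≤ Y ^ 2 / P := by positivity
      have := min_lower (l * (Y ^ 2 / P)) 1 one_pos (by positivity)
      have h2 : min 1 (l * (Y ^ 2 / P)) ≤ min 1 (Y ^ 2 / P) :=
        min_le_min_left _ (by nlinarith)
      refine le_trans (le_of_eq ?_) (this.trans h2)
      ring
    refine le_trans ?_ h1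
    rw [Ex_sub, Ex_mul_left, Ex_mul_left, lin_second]
    have h4 := lin_fourth c
    have : (l / P) ^ 2 / 4 * Ex (fun B : Fin n → Bool => (∑ j, chi (B j) * c j) ^ 4) ≤
      (l / P) ^ 2 / 4 * (9 * N ^ 2) := by gcongr
    refine le_trans (le_of_eq ?_) (sub_le_sub_left this _)
    ring
  have hr : 0 ≤ N / P := by positivity
  set r := N / P
  rcases le_total r (2 / 9) with h | h
  · have := key 1 zero_le_one le_rfl
    have hm : min 1 r ≤ r := min_le_right _ _
    nlinarith
  · have hr0 : 0 < r := by linarith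
    have := key (2 / 9 / r) (by positivity) (by rw [div_le_one hr0]; exact h)
    rw [div_mul_cancel₀ _ hr0.ne'] at this
    have hm : min 1 r ≤ 1 := min_le_left _ _
    norm_num at this
    linarith

lemma grad_second {n d : ℕ} {f : (Fin n → Bool) → ℝ} (hf : f ∈ Deg univ d) :
    Ex (fun x => (∑ j, Dv f j x ^ 2) ^ 2) ≤ 9 ^ d * (Ex (fun x => ∑ j, Dv f j x ^ 2)) ^ 2 := by
  have : (fun x => (∑ j, Dv f j x ^ 2) ^ 2) =
      fun x => ∑ i, ∑ j, Dv f i x ^ 2 * Dv f j x ^ 2 := by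
    funext x; rw [sq, Finset.sum_mul_sum]
  rw [this, Ex_sum, Ex_sum, sq (∑ j, _), Finset.sum_mul_sum, Finset.mul_sum]
  refine Finset.sum_le_sum fun i _ => ?_
  rw [Ex_sum, Finset.mul_sum]
  refine Finset.sum_le_sum fun j _ => ?_
  have hi := bonami univ d _ (Dv_mem hf i)
  have hj := bonami univ d _ (Dv_mem hf j)
  have cs := Ex_cs (fun x => Dv f i x ^ 2) (fun x => Dv f j x ^ 2)
  simp only [← pow_mul] at cs
  norm_num at cs
  have hA : 0 ≤ Ex (fun x => Dv f i x ^ 2) := Ex_nonneg fun x => by positivity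
  have hB : 0 ≤ Ex (fun x => Dv f j x ^ 2) := Ex_nonneg fun x => by positivity
  have hG4 : 0 ≤ Ex (fun x => Dv f i x ^ 4) := Ex_nonneg fun x => by positivity
  have hH4 : 0 ≤ Ex (fun x => Dv f j x ^ 4) := Ex_nonneg fun x => by positivity
  refine abs_le_of_sq_le_sq' ?_ (by positivity) |>.2
  refine cs.trans ?_
  calc _ ≤ (9 ^ d * (Ex fun x => Dv f i x ^ 2) ^ 2) * (9 ^ d * (Ex fun x => Dv f j x ^ 2) ^ 2) := by
        gcongr
    _ = _ := by ring

lemma core_lower {n : ℕ} (N P : (Fin n → Bool) → ℝ) (hN : ∀ x, 0 ≤ N x) (hP : ∀ x, 0 < P x)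
    (R s : ℝ) (hR : 1 ≤ R) (hs0 : 0 < s) (hs1 : s ≤ 1) (hM : 0 < Ex N) (hW : 0 < Ex P)
    (hNN : Ex (fun x => N x ^ 2) ≤ R * Ex N ^ 2) (hsM : s * Ex N ≤ Ex P) :
    s * Ex N / (8 * R * Ex P) ≤ Ex (fun x => min 1 (N x / P x)) := by
  set M := Ex N with hMdef
  set W := Ex P with hWdef
  have hRpos : 0 < R := by linarith
  set t := s * M / (4 * W) with ht
  have ht0 : 0 < t := by positivity
  have ht1 : t ≤ 1 := by
    rw [ht, div_le_one (by positivity)]; linarith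
  set L := 4 * R with hL
  have hL0 : 0 < L := by positivity
  have h1 : Ex (fun x => (s / (L * W) * N x - (s / (L * W)) ^ 2 / (4 * t) * N x ^ 2) -
      t / (L * W) * P x) ≤ Ex (fun x => min 1 (N x / P x)) := by
    refine Ex_mono fun x => ?_
    have ha : 0 ≤ s / (L * W) * N x := mul_nonneg (by positivity) (hN x)
    have hm := min_lower (s / (L * W) * N x) t ht0 ha
    have e : (s / (L * W)) ^ 2 / (4 * t) * N x ^ 2 = (s / (L * W) * N x) ^ 2 / (4 * t) := by ring
    rw [e]
    have hb : 0 ≤ t / (L * W) * P x := mul_nonneg (by positivity) (hP x).le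
    rcases le_total (P x) (L * W) with h | h
    · have : min t (s / (L * W) * N x) ≤ min 1 (N x / P x) := by
        refine min_le_min ht1 ?_
        calc s / (L * W) * N x ≤ 1 / (L * W) * N x := by
              have := hN x
              gcongr
          _ = N x / (L * W) := by ring
          _ ≤ N x / P x := div_le_div_of_nonneg_left (hN x) (hP x) h
      linarith
    · have h0 : 0 ≤ min 1 (N x / P x) := le_min zero_le_one (div_nonneg (hN x) (hP x).le)
      have h2 : t ≤ t / (L * W) * P x := by
        rw [div_mul_eq_mul_div, le_div_iff₀ (by positivity)]
        exact mul_le_mul_of_nonneg_left h ht0.le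
      have := min_le_left t (s / (L * W) * N x)
      linarith
  refine le_trans ?_ h1
  rw [Ex_sub, Ex_sub, Ex_mul_left, Ex_mul_left, Ex_mul_left]
  have h3 : (s / (L * W)) ^ 2 / (4 * t) * Ex (fun x => N x ^ 2) ≤
      (s / (L * W)) ^ 2 / (4 * t) * (R * M ^ 2) := by gcongr
  have e1 : (s / (L * W)) ^ 2 / (4 * t) * (R * M ^ 2) = s * M / (4 * L * W) := by
    rw [ht, hL]; field_simp
  have e2 : t / (L * W) * W = s * M / (4 * L * W) := by
    rw [ht]; field_simp
  have e3 : s / (L * W) * M = 4 * (s * M / (4 * L * W)) := by field_simp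
  have e4 : s * M / (8 * R * W) = 2 * (s * M / (4 * L * W)) := by
    rw [hL]; field_simp; norm_num
  have e5 : Ex (fun x => N x) = M := rfl
  have e6 : Ex (fun x => P x) = W := rfl
  rw [e4]
  rw [e1] at h3
  linarith

lemma alpha_lower {n : ℕ} (p : MvPolynomial (Fin n) ℝ) (h0 : ∀ x, pev p x ≠ 0) :
    (1 / 9) * Ex (fun x => min 1 ((∑ j, Dv (pev p) j x ^ 2) / pev p x ^ 2)) ≤ alphaP p := by
  have : alphaP p = Ex (fun A => Ex (fun B : Fin n → Bool =>
      min 1 ((∑ j, chi (B j) * Dv (pev p) j A) ^ 2 / pev p A ^ 2))) := by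
    unfold alphaP Ex Dv
    rw [← Finset.sum_div, div_div]
  rw [this, ← Ex_mul_left]
  refine Ex_mono fun A => ?_
  have := h0 A
  exact inner_lower _ _ (by positivity)

lemma var_le {n d : ℕ} (p : MvPolynomial (Fin n) ℝ) (hm : pev p ∈ Deg univ d)
    (h0 : ∀ x, pev p x ≠ 0) (ha : 144 * 9 ^ d * alphaP p ≤ 1) :
    Ex (fun x => (pev p x - Ex (pev p)) ^ 2) ≤ 144 * 9 ^ d * alphaP p * Ex (pev p) ^ 2 := by
  set μ := Ex (pev p) with hμ
  set N := fun x => ∑ j, Dv (pev p) j x ^ 2 with hN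
  set P := fun x => pev p x ^ 2 with hP
  have hN0 : ∀ x, 0 ≤ N x := fun x => Finset.sum_nonneg fun j _ => sq_nonneg _
  have hP0 : ∀ x, 0 < P x := fun x => by have := h0 x; simp only [hP]; positivity
  have hW : 0 < Ex P := by
    unfold Ex
    exact div_pos (Finset.sum_pos (fun x _ => hP0 x) Finset.univ_nonempty) (by positivity)
  have hM0 : 0 ≤ Ex N := Ex_nonneg hN0
  have hR : (1 : ℝ) ≤ 9 ^ d := one_le_pow₀ (by norm_num)
  have hal := alpha_lower p h0
  have hα : 0 ≤ alphaP p := by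
    refine le_trans ?_ hal
    refine mul_nonneg (by norm_num) (Ex_nonneg fun x => le_min zero_le_one ?_)
    exact div_nonneg (hN0 x) (hP0 x).le
  have hpo := poincare univ d _ hm
  have hvar : Ex (fun x => (pev p x - μ) ^ 2) = Ex P - μ ^ 2 := by
    have : (fun x => (pev p x - μ) ^ 2) = fun x => (P x - (2 * μ) * pev p x) + μ ^ 2 := by
      funext x; simp only [hP]; ring
    rw [this, Ex_add, Ex_sub, Ex_mul_left, Ex_const]
    have e5 : Ex (fun x => pev p x) = μ := rfl
    have e6 : Ex (fun x => P x) = Ex P := rfl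
    rw [e5, e6]; ring
  rw [← Ex_sum] at hpo
  change Ex P - μ ^ 2 ≤ Ex N at hpo
  rw [hvar]
  have hMW : Ex N ≤ 72 * 9 ^ d * alphaP p * Ex P := by
    rcases hM0.eq_or_lt with h | hM
    · rw [← h]; positivity
    have hNN := grad_second hm
    rcases le_total (Ex N) (Ex P) with h | h
    · have := core_lower N P hN0 hP0 (9 ^ d) 1 hR one_pos le_rfl hM hW hNN (by linarith)
      have h2 : 1 * Ex N / (8 * 9 ^ d * Ex P) ≤ 9 * alphaP p := by
        refine this.trans ?_
        linarith
      rw [div_le_iff₀ (by positivity)] at h2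
      linarith
    · have := core_lower N P hN0 hP0 (9 ^ d) (Ex P / Ex N) hR (by positivity)
        (by rw [div_le_one hM]; exact h) hM hW hNN (by rw [div_mul_cancel₀ _ hM.ne'])
      have h2 : Ex P / Ex N * Ex N / (8 * 9 ^ d * Ex P) ≤ 9 * alphaP p := by
        refine this.trans ?_
        linarith
      rw [div_mul_cancel₀ _ hM.ne', div_le_iff₀ (by positivity)] at h2
      exfalso
      have h3 : 0 < Ex P * (1 - 72 * 9 ^ d * alphaP p) := mul_pos hW (by linarith)
      nlinarith
  have hv0 : 0 ≤ Ex P - μ ^ 2 := by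
    rw [← hvar]; exact Ex_nonneg fun x => sq_nonneg _
  nlinarith

lemma bsa_le {n : ℕ} (f : (Fin n → Bool) → ℝ) (s : ℝ) :
    BSA f ≤ 2 * n * Ex (fun x => if f x ≠ s then (1 : ℝ) else 0) := by
  set I : (Fin n → Bool) → ℝ := fun x => if f x ≠ s then (1 : ℝ) else 0 with hI
  have h1 : BSA f ≤ Ex (fun x => ∑ i : Fin n, (I x + I (flipAt x i))) := by
    change Ex (fun x => Real.sqrt (sens f x)) ≤ _
    refine Ex_mono fun x => ?_
    have hs : Real.sqrt (sens f x) ≤ (sens f x : ℝ) := by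
      rw [Real.sqrt_le_left (by positivity)]
      have : sens f x ≤ sens f x ^ 2 := Nat.le_self_pow (by norm_num) _
      exact_mod_cast this
    refine hs.trans ?_
    unfold sens
    rw [Finset.card_filter]
    push_cast
    refine Finset.sum_le_sum fun i _ => ?_
    simp only [hI]
    by_cases h1 : f x = s <;> by_cases h2 : f (flipAt x i) = s <;> simp [h1, h2] <;>
      split_ifs <;> norm_num
  refine h1.trans (le_of_eq ?_)
  rw [Ex_sum]
  have : ∀ i : Fin n, Ex (fun x => I x + I (flipAt x i)) = 2 * Ex I := by
    intro i
    rw [Ex_add, Ex_flip]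
    ring
  simp only [this]
  simp; ring

lemma bad_le {n : ℕ} (g : (Fin n → Bool) → ℝ) (f : (Fin n → Bool) → ℝ) (μ : ℝ) (hμ : μ ≠ 0)
    (hg : ∀ x, g x ≠ 0 ∧ f x = Real.sign (g x)) (k : ℕ) :
    Ex (fun x => if f x ≠ Real.sign μ then (1 : ℝ) else 0) * (μ ^ 2) ^ 2 ^ k ≤
      Ex (fun x => (g x - μ) ^ 2 ^ (k + 1)) := by
  rw [mul_comm, ← Ex_mul_left]
  refine Ex_mono fun x => ?_
  have e : (g x - μ) ^ 2 ^ (k + 1) = ((g x - μ) ^ 2) ^ 2 ^ k := by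
    rw [← pow_mul]; congr 1; ring
  rw [e]
  split_ifs with h
  · rw [mul_one]
    have : μ ^ 2 ≤ (g x - μ) ^ 2 := by
      obtain ⟨h0, hf⟩ := hg x
      rw [hf] at h
      rcases lt_or_gt_of_ne h0 with h1 | h1 <;> rcases lt_or_gt_of_ne hμ with h2 | h2
      · exact absurd (by rw [Real.sign_of_neg h1, Real.sign_of_neg h2]) h
      · nlinarith
      · nlinarith
      · exact absurd (by rw [Real.sign_of_pos h1, Real.sign_of_pos h2]) h
    gcongr
  · rw [mul_zero]; positivity

/-- If `α(p)` is very small then `BSA[sgn p] ≤ α(p)`. -/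
theorem bsa_le_alpha_of_small_alpha (d : ℕ) (hd : 1 ≤ d) :
    ∃ K : ℝ, 0 < K ∧ ∀ n : ℕ, 2 ≤ n → ∀ (f : (Fin n → Bool) → ℝ)
      (p : MvPolynomial (Fin n) ℝ),
      (∀ m ∈ p.support, ∀ i, m i ≤ 1) → p.totalDegree ≤ d →
      (∀ x, pev p x ≠ 0 ∧ f x = Real.sign (pev p x)) →
      alphaP p ≤ (K * Real.log n) ^ (-(2 * (d : ℝ))) →
      BSA f ≤ alphaP p := by
  obtain ⟨C, hC⟩ : ∃ C : ℝ, C = 144 * 9 ^ d := ⟨_, rfl⟩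
  have hR : (1 : ℝ) ≤ 9 ^ d := one_le_pow₀ (by norm_num)
  have hC1 : 1 ≤ C := by rw [hC]; linarith
  have hC0 : 0 < C := by linarith
  set D : ℝ := 81 * 9 ^ d * C ^ 3 with hD
  have hD1 : 1 ≤ D := by
    have : 1 ≤ C ^ 3 := one_le_pow₀ hC1
    rw [hD]; nlinarith
  have hD0 : 0 < D := by linarith
  refine ⟨4 * D, by positivity, ?_⟩
  intro n hn f p hm hdeg hp hα
  have h0 : ∀ x, pev p x ≠ 0 := fun x => (hp x).1
  have hmem := pev_mem p hm hdeg
  have hα0 : 0 ≤ alphaP p := by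
    unfold alphaP
    refine div_nonneg (Finset.sum_nonneg fun A _ => Finset.sum_nonneg fun B _ => ?_) (by positivity)
    exact le_min zero_le_one (by positivity)
  have hn2 : (2 : ℝ) ≤ n := by exact_mod_cast hn
  have hn0 : (0 : ℝ) < n := by linarith
  obtain ⟨l, hl⟩ : ∃ l : ℝ, l = Real.log n := ⟨_, rfl⟩
  have hl1 : 1 ≤ 2 * l := by
    have := Real.log_le_log (by norm_num) hn2
    have := Real.log_two_gt_d9
    rw [hl]; linarith
  have hl0 : 0 < l := by linarith
  obtain ⟨j, hj1, hj2⟩ := exists_nat_pow_near (y := (2 : ℝ)) hl1 (by norm_num)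
  obtain ⟨k, hk⟩ : ∃ k, k = j + 1 := ⟨_, rfl⟩
  rw [← hk] at hj2
  have hq4 : (2 : ℝ) ^ k ≤ 4 * l := by rw [hk, pow_succ]; linarith
  rw [← hl] at hα
  -- bound on x
  obtain ⟨x, hx⟩ : ∃ x : ℝ, x = 3 ^ (d * k) * (C * alphaP p) := ⟨_, rfl⟩
  have hx0 : 0 ≤ x := by rw [hx]; positivity
  have hα' : alphaP p * (4 * l) ^ (2 * d) ≤ 1 / D := by
    have e : (4 * D * l) ^ (-(2 * (d : ℝ))) = ((4 * D * l) ^ (2 * d))⁻¹ := by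
      rw [Real.rpow_neg (by positivity)]
      congr 1
      rw [← Real.rpow_natCast]; push_cast; rfl
    rw [e] at hα
    have : D ≤ D ^ (2 * d) := le_self_pow₀ hD1 (by omega)
    calc alphaP p * (4 * l) ^ (2 * d) ≤ ((4 * D * l) ^ (2 * d))⁻¹ * (4 * l) ^ (2 * d) := by gcongr
      _ = 1 / D ^ (2 * d) := by
        rw [show 4 * D * l = D * (4 * l) by ring, mul_pow]; field_simp
      _ ≤ 1 / D := by gcongr
  have h3 : (3 : ℝ) ^ (d * k) ≤ (4 * l) ^ (2 * d) := by
    calc (3 : ℝ) ^ (d * k) ≤ 4 ^ (d * k) := by gcongr; norm_num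
      _ = (2 ^ k) ^ (2 * d) := by
        rw [show (4 : ℝ) = 2 ^ 2 by norm_num, ← pow_mul, ← pow_mul]; congr 1; ring
      _ ≤ _ := by gcongr
  have hxD : x ≤ C / D := by
    calc x = C * (alphaP p * 3 ^ (d * k)) := by rw [hx]; ring
      _ ≤ C * (alphaP p * (4 * l) ^ (2 * d)) := by gcongr
      _ ≤ C * (1 / D) := by gcongr
      _ = C / D := by ring
  have hCD : C / D = 1 / (81 * 9 ^ d * C ^ 2) := by rw [hD]; field_simp
  have hCD1 : C / D ≤ 1 := by
    rw [hCD, div_le_one (by positivity)]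
    have : 1 ≤ C ^ 2 := one_le_pow₀ hC1
    nlinarith
  have hCα : C * alphaP p ≤ 1 := by
    have h1 : (1 : ℝ) ≤ 3 ^ (d * k) := one_le_pow₀ (by norm_num)
    have : C * alphaP p ≤ x := by
      rw [hx]; exact le_mul_of_one_le_left (by positivity) h1
    linarith
  have hvar := var_le p hmem h0 (by rw [← hC]; exact hCα)
  rw [← hC] at hvar
  obtain ⟨μ, hμ⟩ : ∃ μ, μ = Ex (pev p) := ⟨_, rfl⟩
  rw [← hμ] at hvar
  have hμ0 : μ ≠ 0 := by
    intro hz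
    rw [hz] at hvar
    have : 0 < Ex (fun x => (pev p x - 0) ^ 2) := by
      unfold Ex
      refine div_pos (Finset.sum_pos (fun x _ => ?_) Finset.univ_nonempty) (by positivity)
      have := h0 x
      rw [sub_zero]; positivity
    rw [zero_pow two_ne_zero, mul_zero] at hvar
    linarith
  have hgm : (fun x => pev p x - μ) ∈ Deg (univ : Finset (Fin n)) d := by
    have e : (fun x => pev p x - μ) = pev p - μ • wal (∅ : Finset (Fin n)) := by
      funext x; simp [wal]
    rw [e]
    exact Submodule.sub_mem _ hmem (Submodule.smul_mem _ _ (wal_mem (subset_univ _) (by simp)))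
  have hmo := moment hgm k
  have hbad := bad_le (pev p) f μ hμ0 hp k
  have hbsa := bsa_le f (Real.sign μ)
  obtain ⟨b, hb⟩ : ∃ b, b = Ex (fun x => if f x ≠ Real.sign μ then (1 : ℝ) else 0) := ⟨_, rfl⟩
  rw [← hb] at hbad hbsa
  have hμ2 : 0 < μ ^ 2 := by positivity
  have hbx : b ≤ x ^ 2 ^ k := by
    have h1 : b * (μ ^ 2) ^ 2 ^ k ≤ x ^ 2 ^ k * (μ ^ 2) ^ 2 ^ k := by
      refine hbad.trans (hmo.trans ?_)
      rw [← mul_pow]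
      refine pow_le_pow_left₀ ?_ ?_ _
      · exact mul_nonneg (by positivity) (Ex_nonneg fun x => sq_nonneg _)
      · rw [hx, mul_assoc]; gcongr
    exact le_of_mul_le_mul_right h1 (by positivity)
  -- final numerics
  obtain ⟨r, hr⟩ : ∃ r : ℕ, r = 2 ^ j := ⟨_, rfl⟩
  have hr1 : 1 ≤ r := by rw [hr]; exact Nat.one_le_two_pow
  have hq : 2 ^ k = r + r := by rw [hk, hr]; ring
  have hlr : l ≤ r := by
    have : (2 : ℝ) ^ k = r + r := by exact_mod_cast hq
    linarith
  have hnr : (n : ℝ) ≤ 3 ^ r := by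
    calc (n : ℝ) = Real.exp l := by rw [hl, Real.exp_log hn0]
      _ ≤ Real.exp r := Real.exp_le_exp.mpr hlr
      _ = Real.exp 1 ^ r := by rw [← Real.exp_nat_mul, mul_one]
      _ ≤ 3 ^ r := by
        gcongr
        exact Real.exp_one_lt_three.le
  have hk2 : k ≤ 2 * r := by
    have : k < 2 ^ k := Nat.lt_two_pow_self
    omega
  have hx1 : x ≤ 1 := hxD.trans hCD1
  have hmain : 2 * n * (3 ^ (d * k) * C * x ^ (r + r - 1)) ≤ 1 := by
    have a1 : x ^ (r + r - 1) ≤ x ^ r := pow_le_pow_of_le_one hx0 hx1 (by omega)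
    have a2 : x ^ r ≤ (1 / (81 * 9 ^ d * C ^ 2)) ^ r := by
      rw [← hCD]; gcongr
    have a3 : (3 : ℝ) ^ (d * k) ≤ (9 ^ d) ^ r := by
      calc (3 : ℝ) ^ (d * k) ≤ 3 ^ (d * (2 * r)) := by
            gcongr
            norm_num
        _ = _ := by
          rw [show (9 : ℝ) = 3 ^ 2 by norm_num, ← pow_mul, ← pow_mul]; congr 1; ring
    have a4 : C ≤ (C ^ 2) ^ r := by
      rw [← pow_mul]; exact le_self_pow₀ hC1 (by omega)
    have a5 : 2 * (n : ℝ) ≤ 81 ^ r := by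
      calc 2 * (n : ℝ) ≤ n * n := by nlinarith
        _ ≤ 3 ^ r * 3 ^ r := by gcongr
        _ = 9 ^ r := by rw [← mul_pow]; norm_num
        _ ≤ 81 ^ r := by gcongr; norm_num
    calc 2 * n * (3 ^ (d * k) * C * x ^ (r + r - 1))
        ≤ 81 ^ r * ((9 ^ d) ^ r * (C ^ 2) ^ r * (1 / (81 * 9 ^ d * C ^ 2)) ^ r) := by
          gcongr
          exact a1.trans a2
      _ = (81 * 9 ^ d * C ^ 2 * (1 / (81 * 9 ^ d * C ^ 2))) ^ r := by
          rw [← mul_pow, ← mul_pow, ← mul_pow]; congr 1; ring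
      _ = 1 := by rw [mul_one_div_cancel (by positivity), one_pow]
  calc BSA f ≤ 2 * n * b := hbsa
    _ ≤ 2 * n * x ^ 2 ^ k := by gcongr
    _ = 2 * n * (x ^ (r + r - 1) * x) := by
      rw [hq, ← pow_succ]; congr 2; omega
    _ = 2 * n * (3 ^ (d * k) * C * x ^ (r + r - 1)) * alphaP p := by
      nth_rewrite 2 [hx]; ring
    _ ≤ 1 * alphaP p := by gcongr
    _ = alphaP p := one_mul _
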